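/- Let n ≥ 8 be even, and in the alternating group A_n on {1,…,n} let x₁ = (1,2)(3,4), y₁ = (2,3,4,…,n), x₂ = (1,2,3)(4,5,…,n) and y₂ = (5,4,3,2,1). Then {(x₁,y₁),(x₂,y₂)} is a Beauville structure for A_n. -/

import Mathlib

/-- `beauvilleSigmaIn K x y` is Σ(x,y) computed inside the subgroup `K`: the set of all
`K`-conjugates of all powers of `x`, `y` and `x*y`. -/
def beauvilleSigmaIn {G : Type*} [Group G] (K : Subgroup G) (x y : G) : Set G :=
  {a | ∃ (i : ℕ), ∃ g ∈ K,
      a = g * x ^ i * g⁻¹ ∨ a = g * y ^ i * g⁻¹ ∨ a = g * (x * y) ^ i * g⁻¹}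

/-- `{(x₁,y₁),(x₂,y₂)}` is a Beauville structure for the subgroup `K`:
both pairs generate `K` and `Σ(x₁,y₁) ∩ Σ(x₂,y₂) = {1}` (computed within `K`). -/
def IsBeauvilleStructureFor {G : Type*} [Group G] (K : Subgroup G) (x₁ y₁ x₂ y₂ : G) : Prop :=
  Subgroup.closure {x₁, y₁} = K ∧ Subgroup.closure {x₂, y₂} = K ∧
    beauvilleSigmaIn K x₁ y₁ ∩ beauvilleSigmaIn K x₂ y₂ = {1}

/-!
Nontrivial powers of elements of the first triple `(x₁, y₁, x₁ * y₁)` move `2`, `4` or `n - 1`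
points, those of the second triple move `3`, `5`, `n - 3` or `n` points. As `n ≥ 8`, these numbers
are different, so the two sets `Σ` meet only in the identity.

Each pair generates a `2`-transitive group of even permutations, which by Jordan's theorem is the
whole alternating group once it contains a `3`-cycle. In the first group, the double transpositions
`x₁ = (1,2)(3,4)` and `y₁ ^ 3 * x₁ * y₁ ^ (-3) = (1,5)(6,7)` share only the point `1`, so the square
of their product is a `3`-cycle. In the second, `x₂ * y₂` is the conjugate of `(4,5,…,n)` by
the transposition `(1,5)`, so that `(x₂ * y₂) ^ 3 * x₂ ^ (-3)` is the product of `(1,5)` with its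
conjugate `(1,8)`.
-/

open Equiv Equiv.Perm

section FormPerm

variable {α : Type*} [DecidableEq α]

theorem formPerm_apply_ne_self_iff {l : List α} (hl : l.Nodup) (hlen : 2 ≤ l.length) {a : α} :
    l.formPerm a ≠ a ↔ a ∈ l :=
  ⟨List.mem_of_formPerm_apply_ne, fun ha ↦ (l.formPerm_apply_mem_ne_self_iff hl a ha).mpr hlen⟩

theorem formPerm_pow_apply_of_getElem?_eq_some {l : List α} (hl : l.Nodup) {a b : α} {i k : ℕ}
    (ha : l[i]? = some a) (hb : l[i + k]? = some b) : (l.formPerm ^ k) a = b := by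
  obtain ⟨hi, rfl⟩ := List.getElem?_eq_some_iff.mp ha
  obtain ⟨hik, rfl⟩ := List.getElem?_eq_some_iff.mp hb
  simp only [List.formPerm_pow_apply_getElem l hl, Nat.mod_eq_of_lt hik]

theorem formPerm_map (f : Perm α) : ∀ l : List α, (l.map f).formPerm = f * l.formPerm * f⁻¹
  | [] => by simp
  | [a] => by simp
  | a :: b :: l => by
    have ih : (f b :: l.map f).formPerm = f * (b :: l).formPerm * f⁻¹ := formPerm_map f (b :: l)
    rw [List.map_cons, List.map_cons, List.formPerm_cons_cons, List.formPerm_cons_cons, ih,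
      swap_apply_apply]
    group

theorem card_support_formPerm [Fintype α] {l : List α} (hl : l.Nodup) (hlen : 2 ≤ l.length) :
    (List.formPerm l).support.card = l.length := by
  rw [List.support_formPerm_of_nodup l hl (by rintro x rfl; simp at hlen),
    List.toFinset_card_of_nodup hl]

theorem formPerm_mem_alternatingGroup [Fintype α] {l : List α} (hl : l.Nodup)
    (hodd : Odd l.length) : List.formPerm l ∈ alternatingGroup α := by
  rw [mem_alternatingGroup]
  have hpow := congrArg sign (List.formPerm_pow_length_eq_one_of_nodup l hl)
  rwa [map_pow, map_one, Int.units_pow_eq_pow_mod_two, Nat.odd_iff.mp hodd, pow_one] at hpow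

theorem swap_mul_swap_mul_formPerm {a b c d : α} {l : List α} (hbc : b ≠ c) (hbd : b ≠ d) :
    swap a b * swap c d * List.formPerm (b :: c :: d :: l) = List.formPerm (a :: b :: d :: l) := by
  simp only [List.formPerm_cons_cons]
  rw [swap_comm b d, ← swap_mul_swap_mul_swap hbc hbd]
  simp only [mul_assoc]

theorem swap_conj_pow_mul_inv_pow (f : Perm α) (a b : α) (i : ℕ) :
    (swap a b * f * swap a b) ^ i * (f ^ i)⁻¹ = swap a b * swap ((f ^ i) a) ((f ^ i) b) := by
  have hpow : (swap a b * f * swap a b) ^ i = swap a b * f ^ i * swap a b := by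
    simpa only [swap_inv] using conj_pow (a := swap a b) (b := f) (i := i)
  rw [hpow, swap_apply_apply]
  group

theorem formPerm_three_mul_formPerm_five {a b c d e : α} (h : [a, b, c, d, e].Nodup) :
    List.formPerm [a, b, c] * List.formPerm [e, d, c, b, a] = swap a d * swap a e := by
  have hrotate : List.formPerm [e, d, c, b, a] = List.formPerm [c, b, a, e, d] :=
    (List.formPerm_rotate [e, d, c, b, a] (List.nodup_reverse.mpr h) 2).symm
  calc List.formPerm [a, b, c] * List.formPerm [e, d, c, b, a]
    _ = swap a b * (swap b c * (swap c b * (swap b a * (swap a e * swap e d)))) := by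
        simp only [hrotate, List.formPerm_cons_cons, List.formPerm_singleton, mul_one, mul_assoc]
    _ = swap a e * swap e d := by
        rw [swap_comm c b, swap_comm b a, swap_mul_self_mul, swap_mul_self_mul]
    _ = swap a d * swap a e := by
        rw [mul_swap_eq_swap_mul, swap_apply_right,
          swap_apply_of_ne_of_ne (a := a) (b := e) (x := d) (by grind) (by grind)]

theorem disjoint_formPerm_of_nodup_append {l₁ l₂ : List α} (h : (l₁ ++ l₂).Nodup) :
    (List.formPerm l₁).Disjoint (List.formPerm l₂) := fun a ↦ by
  by_cases ha : a ∈ l₁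
  · exact .inr (List.formPerm_apply_of_notMem (List.disjoint_of_nodup_append h ha))
  · exact .inl (List.formPerm_apply_of_notMem ha)

theorem formPerm_mul_formPerm_mul_formPerm_eq_conj {a b c d e : α} {l : List α}
    (h : (a :: b :: c :: d :: e :: l).Nodup) :
    List.formPerm [a, b, c] * List.formPerm (d :: e :: l) * List.formPerm [e, d, c, b, a] =
      swap a e * List.formPerm (d :: e :: l) * swap a e := by
  have hcomm : Commute (List.formPerm [a, b, c]) (List.formPerm (d :: e :: l)) :=
    (disjoint_formPerm_of_nodup_append (l₁ := [a, b, c]) h).commute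
  have ha : List.formPerm (d :: e :: l) a = a := List.formPerm_apply_of_notMem (by grind)
  have hd : List.formPerm (d :: e :: l) d = e := List.formPerm_apply_head _ _ _ (by grind)
  rw [hcomm.eq, mul_assoc,
    formPerm_three_mul_formPerm_five (h.sublist (List.sublist_append_left [a, b, c, d, e] l)),
    ← mul_assoc, mul_swap_eq_swap_mul (List.formPerm (d :: e :: l)), ha, hd]

theorem formPerm_mul_formPerm_mul_formPerm {a b c d e : α} {l : List α}
    (h : (a :: b :: c :: d :: e :: l).Nodup) :
    List.formPerm [a, b, c] * List.formPerm (d :: e :: l) * List.formPerm [e, d, c, b, a] =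
      List.formPerm (d :: a :: l) := by
  have hfix {x : α} (hx : x ∈ d :: l) : swap a e x = x :=
    swap_apply_of_ne_of_ne (by grind) (by grind)
  have hmap : (d :: e :: l).map (swap a e) = d :: a :: l := by
    rw [List.map_cons, List.map_cons, swap_apply_right, hfix List.mem_cons_self,
      List.map_congr_left fun x hx ↦ hfix (List.mem_cons_of_mem d hx), List.map_id']
  rw [formPerm_mul_formPerm_mul_formPerm_eq_conj h, ← hmap, formPerm_map, swap_inv]

theorem swap_mul_swap_mul_swap_mul_swap_sq {a b c d e f g : α}
    (h : [a, b, c, d, e, f, g].Nodup) :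
    (swap a b * swap c d * (swap a e * swap f g)) ^ 2 = (swap a b * swap a e) ^ 2 := by
  have comm {x y z w : α} (hxyzw : [x, y, z, w].Nodup) : Commute (swap x y) (swap z w) :=
    (disjoint_swap_swap hxyzw).commute
  have hac : Commute (swap c d) (swap a e) := comm (by grind)
  have hbc : Commute (swap a b * swap a e) (swap c d * swap f g) :=
    ((comm (by grind)).mul_right (comm (by grind))).mul_left
      ((comm (by grind)).mul_right (comm (by grind)))
  have hsq : (swap c d * swap f g) ^ 2 = 1 := by
    rw [(comm (by grind)).mul_pow, sq, sq, swap_mul_self, swap_mul_self, mul_one]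
  rw [hac.mul_mul_mul_comm, hbc.mul_pow, hsq, mul_one]

end FormPerm

section Primitivity

theorem isPreprimitive_of_mem_orbit_stabilizer {G α : Type*} [Group G] [MulAction G α] {p q : α}
    (hmove : ∃ g : G, g • p ≠ p)
    (horbit : ∀ a ≠ p, a ∈ MulAction.orbit (MulAction.stabilizer G p) q) :
    MulAction.IsPreprimitive G α := by
  obtain ⟨t, ht⟩ := hmove
  have horbit_of_ne {a b : α} (ha : a ≠ p) (hb : b ≠ p) :
      ∃ g : MulAction.stabilizer G p, g • a = b := by
    rw [← MulAction.mem_orbit_iff, MulAction.orbit_eq_iff.mpr (horbit a ha)]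
    exact horbit b hb
  have htransitive : MulAction.IsPretransitive G α := by
    refine (MulAction.isPretransitive_iff_base p).mpr fun a ↦ ?_
    rcases eq_or_ne a p with rfl | ha
    · exact ⟨1, one_smul G a⟩
    · obtain ⟨g, hg⟩ := horbit_of_ne ht ha
      exact ⟨g * t, (mul_smul _ _ _).trans hg⟩
  apply MulAction.isPreprimitive_of_is_two_pretransitive
  rw [SubMulAction.ofStabilizer.isMultiplyPretransitive (a := p),
    MulAction.is_one_pretransitive_iff]
  refine ⟨fun a b ↦ ?_⟩
  obtain ⟨g, hg⟩ := horbit_of_ne a.2 b.2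
  exact ⟨g, Subtype.ext hg⟩

theorem mem_orbit_stabilizer_of_isCycle_mem {α : Type*} {G : Subgroup (Perm α)} {f : Perm α}
    {p q a : α} (hf : f.IsCycle) (hfG : f ∈ G) (hp : f p = p) (hq : f q ≠ q) (ha : f a ≠ a) :
    a ∈ MulAction.orbit (MulAction.stabilizer G p) q := by
  obtain ⟨i, hi⟩ := hf.sameCycle hq ha
  exact ⟨⟨⟨f ^ i, G.zpow_mem hfG i⟩, zpow_apply_eq_self_of_apply_eq_self hp i⟩, hi⟩

theorem isPreprimitive_of_formPerm_mem {α : Type*} [DecidableEq α] {G : Subgroup (Perm α)}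
    {l₁ l₂ : List α} {h : Perm α} {p q : α} (hl₁ : l₁.Nodup) (hl₂ : l₂.Nodup)
    (hlen₁ : 2 ≤ l₁.length) (hlen₂ : 2 ≤ l₂.length)
    (hG₁ : l₁.formPerm ∈ G) (hG₂ : l₂.formPerm ∈ G) (hG : h ∈ G)
    (hp₁ : p ∉ l₁) (hp₂ : p ∉ l₂) (hp : h p ≠ p) (hq₁ : q ∈ l₁) (hq₂ : q ∈ l₂)
    (hcover : ∀ a ≠ p, a ∈ l₁ ∨ a ∈ l₂) : MulAction.IsPreprimitive G α := by
  have horbit {l : List α} {a : α} (hl : l.Nodup) (hlen : 2 ≤ l.length) (hlG : l.formPerm ∈ G)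
      (hpl : p ∉ l) (hql : q ∈ l) (ha : a ∈ l) :
      a ∈ MulAction.orbit (MulAction.stabilizer G p) q :=
    mem_orbit_stabilizer_of_isCycle_mem (List.isCycle_formPerm hl hlen) hlG
      (List.formPerm_apply_of_notMem hpl) ((formPerm_apply_ne_self_iff hl hlen).mpr hql)
      ((formPerm_apply_ne_self_iff hl hlen).mpr ha)
  refine isPreprimitive_of_mem_orbit_stabilizer (p := p) (q := q) ⟨⟨h, hG⟩, hp⟩ fun a ha ↦ ?_
  rcases hcover a ha with ha₁ | ha₂
  · exact horbit hl₁ hlen₁ hG₁ hp₁ hq₁ ha₁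
  · exact horbit hl₂ hlen₂ hG₂ hp₂ hq₂ ha₂

end Primitivity

section Generation

variable {α : Type*} [DecidableEq α] {p₀ p₁ p₂ p₃ p₄ p₅ p₆ p₇ : α} {l : List α}

theorem isThreeCycle_sq_mul_conj_formPerm_pow_three [Fintype α]
    (h : (p₀ :: p₁ :: p₂ :: p₃ :: p₄ :: p₅ :: p₆ :: l).Nodup) {x y : Perm α}
    (hx : x = swap p₀ p₁ * swap p₂ p₃)
    (hy : y = List.formPerm (p₁ :: p₂ :: p₃ :: p₄ :: p₅ :: p₆ :: l)) :
    IsThreeCycle ((x * (y ^ 3 * x * (y ^ 3)⁻¹)) ^ 2) := by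
  have hy₀ : (y ^ 3) p₀ = p₀ :=
    pow_apply_eq_self_of_apply_eq_self (hy ▸ List.formPerm_apply_of_notMem (by grind)) 3
  have hy₁ : (y ^ 3) p₁ = p₄ :=
    hy ▸ formPerm_pow_apply_of_getElem?_eq_some h.of_cons (i := 0) rfl rfl
  have hy₂ : (y ^ 3) p₂ = p₅ :=
    hy ▸ formPerm_pow_apply_of_getElem?_eq_some h.of_cons (i := 1) rfl rfl
  have hy₃ : (y ^ 3) p₃ = p₆ :=
    hy ▸ formPerm_pow_apply_of_getElem?_eq_some h.of_cons (i := 2) rfl rfl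
  have hconj : y ^ 3 * x * (y ^ 3)⁻¹ = swap p₀ p₄ * swap p₅ p₆ := by
    rw [hx, ← conj_mul, ← swap_apply_apply, ← swap_apply_apply, hy₀, hy₁, hy₂, hy₃]
  rw [hconj, hx, swap_mul_swap_mul_swap_mul_swap_sq (by grind), sq]
  exact (isThreeCycle_swap_mul_swap_same (by grind) (by grind) (by grind)).isThreeCycle_sq

theorem isThreeCycle_mul_pow_three_mul_pow_three_inv [Fintype α]
    (h : (p₀ :: p₁ :: p₂ :: p₃ :: p₄ :: p₅ :: p₆ :: p₇ :: l).Nodup) {x y : Perm α}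
    (hx : x = List.formPerm [p₀, p₁, p₂] * List.formPerm (p₃ :: p₄ :: p₅ :: p₆ :: p₇ :: l))
    (hy : y = List.formPerm [p₄, p₃, p₂, p₁, p₀]) :
    IsThreeCycle ((x * y) ^ 3 * (x ^ 3)⁻¹) := by
  set f := List.formPerm (p₃ :: p₄ :: p₅ :: p₆ :: p₇ :: l)
  have hdisjoint : (List.formPerm [p₀, p₁, p₂]).Disjoint f :=
    disjoint_formPerm_of_nodup_append (l₁ := [p₀, p₁, p₂]) h
  have hcube : List.formPerm [p₀, p₁, p₂] ^ 3 = 1 :=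
    List.formPerm_pow_length_eq_one_of_nodup [p₀, p₁, p₂] (by grind)
  have hx₃ : x ^ 3 = f ^ 3 := by rw [hx, hdisjoint.commute.mul_pow, hcube, one_mul]
  have hf₀ : (f ^ 3) p₀ = p₀ :=
    pow_apply_eq_self_of_apply_eq_self (List.formPerm_apply_of_notMem (by grind)) 3
  have hf₄ : (f ^ 3) p₄ = p₇ :=
    formPerm_pow_apply_of_getElem?_eq_some (by grind) (i := 1) rfl rfl
  rw [hx₃, hx, hy, formPerm_mul_formPerm_mul_formPerm_eq_conj h, swap_conj_pow_mul_inv_pow,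
    hf₀, hf₄]
  have hdistinct : [p₀, p₄, p₇].Nodup := by grind (ematch := 9)
  exact isThreeCycle_swap_mul_swap_same (by grind) (by grind) (by grind)

theorem closure_pair_eq_alternatingGroup [Fintype α] {x y g : Perm α}
    (hx : x ∈ alternatingGroup α) (hy : y ∈ alternatingGroup α)
    (hprimitive : MulAction.IsPreprimitive (Subgroup.closure {x, y}) α)
    (hg : g ∈ Subgroup.closure {x, y}) (hg₃ : g.IsThreeCycle) :
    Subgroup.closure {x, y} = alternatingGroup α :=
  le_antisymm ((Subgroup.closure_le _).mpr (Set.pair_subset hx hy))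
    (alternatingGroup_le_of_isPreprimitive_of_isThreeCycle_mem hprimitive hg₃ hg)

theorem closure_swap_mul_swap_formPerm_eq_alternatingGroup [Fintype α]
    (hnodup : (p₀ :: p₁ :: p₂ :: p₃ :: p₄ :: p₅ :: p₆ :: l).Nodup)
    (hmem : ∀ a, a ∈ p₀ :: p₁ :: p₂ :: p₃ :: p₄ :: p₅ :: p₆ :: l) (hodd : Odd l.length) :
    Subgroup.closure {swap p₀ p₁ * swap p₂ p₃,
      List.formPerm (p₁ :: p₂ :: p₃ :: p₄ :: p₅ :: p₆ :: l)} = alternatingGroup α := by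
  set x := swap p₀ p₁ * swap p₂ p₃ with hx
  set y := List.formPerm (p₁ :: p₂ :: p₃ :: p₄ :: p₅ :: p₆ :: l) with hy
  have hxG : x ∈ Subgroup.closure {x, y} := Subgroup.mem_closure_of_mem (by simp)
  have hyG : y ∈ Subgroup.closure {x, y} := Subgroup.mem_closure_of_mem (by simp)
  have hx₀ : x p₀ ≠ p₀ := by
    rw [hx, mul_apply, swap_apply_of_ne_of_ne (x := p₀) (by grind) (by grind), swap_apply_left]
    grind
  have hxA : x ∈ alternatingGroup α := by
    rw [mem_alternatingGroup, hx, Perm.sign_mul, sign_swap (by grind), sign_swap (by grind),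
      Int.units_mul_self]
  have hyA : y ∈ alternatingGroup α := formPerm_mem_alternatingGroup hnodup.of_cons (by grind)
  refine closure_pair_eq_alternatingGroup hxA hyA ?_ ?_
    (isThreeCycle_sq_mul_conj_formPerm_pow_three hnodup hx hy)
  · exact isPreprimitive_of_formPerm_mem (p := p₀) (q := p₁) hnodup.of_cons hnodup.of_cons
      (by simp) (by simp) hyG hyG hxG (by grind) (by grind) hx₀ (by simp) (by simp)
      fun a ha ↦ .inl ((List.mem_cons.mp (hmem a)).resolve_left ha)
  · have hy₃G := pow_mem hyG 3
    exact pow_mem (mul_mem hxG (mul_mem (mul_mem hy₃G hxG) (inv_mem hy₃G))) 2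

theorem formPerm_five_conj_formPerm
    (h : (p₀ :: p₁ :: p₂ :: p₃ :: p₄ :: l).Nodup) {y : Perm α}
    (hy : y = List.formPerm [p₄, p₃, p₂, p₁, p₀]) :
    y * List.formPerm (p₃ :: p₀ :: l) * y⁻¹ = List.formPerm (p₂ :: p₄ :: l) := by
  have hrev : [p₄, p₃, p₂, p₁, p₀].Nodup := by grind
  have hy₃ : y p₃ = p₂ := hy ▸ List.formPerm_apply_lt_getElem _ hrev 1 (by simp)
  have hy₀ : y p₀ = p₄ := hy ▸ List.formPerm_apply_getLast p₄ [p₃, p₂, p₁, p₀]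
  have hyl {a : α} (ha : a ∈ l) : y a = a := hy ▸ List.formPerm_apply_of_notMem (by grind)
  rw [← formPerm_map, List.map_cons, List.map_cons, hy₃, hy₀,
    List.map_congr_left fun a ha ↦ hyl ha, List.map_id']

theorem closure_formPerm_mul_formPerm_formPerm_eq_alternatingGroup [Fintype α]
    (hnodup : (p₀ :: p₁ :: p₂ :: p₃ :: p₄ :: p₅ :: p₆ :: p₇ :: l).Nodup)
    (hmem : ∀ a, a ∈ p₀ :: p₁ :: p₂ :: p₃ :: p₄ :: p₅ :: p₆ :: p₇ :: l) (heven : Even l.length) :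
    Subgroup.closure {List.formPerm [p₀, p₁, p₂] *
      List.formPerm (p₃ :: p₄ :: p₅ :: p₆ :: p₇ :: l), List.formPerm [p₄, p₃, p₂, p₁, p₀]} =
        alternatingGroup α := by
  set x := List.formPerm [p₀, p₁, p₂] * List.formPerm (p₃ :: p₄ :: p₅ :: p₆ :: p₇ :: l) with hx
  set y := List.formPerm [p₄, p₃, p₂, p₁, p₀] with hy
  have hxG : x ∈ Subgroup.closure {x, y} := Subgroup.mem_closure_of_mem (by simp)
  have hyG : y ∈ Subgroup.closure {x, y} := Subgroup.mem_closure_of_mem (by simp)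
  have hxy : x * y = List.formPerm (p₃ :: p₀ :: p₅ :: p₆ :: p₇ :: l) :=
    formPerm_mul_formPerm_mul_formPerm hnodup
  have hconj : y * (x * y) * y⁻¹ = List.formPerm (p₂ :: p₄ :: p₅ :: p₆ :: p₇ :: l) :=
    hxy ▸ formPerm_five_conj_formPerm hnodup hy
  have hy₁ : y p₁ ≠ p₁ := (formPerm_apply_ne_self_iff (by grind) (by simp)).mpr (by simp)
  have hxA : x ∈ alternatingGroup α :=
    mul_mem (formPerm_mem_alternatingGroup (by grind) (by grind))
      (formPerm_mem_alternatingGroup (by grind) (by grind))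
  have hyA : y ∈ alternatingGroup α := formPerm_mem_alternatingGroup (by grind) (by grind)
  refine closure_pair_eq_alternatingGroup hxA hyA ?_ ?_
    (isThreeCycle_mul_pow_three_mul_pow_three_inv hnodup hx hy)
  -- `x * y` and its conjugate by `y` fix `p₁`, and together they move all the other points.
  · exact isPreprimitive_of_formPerm_mem (p := p₁) (q := p₅) (by grind) (by grind) (by simp)
      (by simp) (hxy ▸ mul_mem hxG hyG)
      (hconj ▸ mul_mem (mul_mem hyG (mul_mem hxG hyG)) (inv_mem hyG)) hyG
      (by grind) (by grind) hy₁ (by simp) (by simp) fun a ha ↦ by have := hmem a; grind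
  · exact mul_mem (pow_mem (mul_mem hxG hyG) 3) (inv_mem (pow_mem hxG 3))

end Generation

section SupportCards

variable {α : Type*} [Fintype α] [DecidableEq α] {f g : Perm α} {a b c d e : α}
  {l : List α}

/-- The numbers of points moved by the nontrivial powers of `f`. This is a conjugacy invariant, and
it is used to separate the sets `Σ(x, y)` of two generating pairs. -/
def powSupportCards (f : Perm α) : Set ℕ :=
  {m | ∃ i : ℕ, f ^ i ≠ 1 ∧ (f ^ i).support.card = m}

theorem card_support_mem_of_mem_beauvilleSigmaIn {K : Subgroup (Perm α)} {x y a : Perm α}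
    (ha : a ∈ beauvilleSigmaIn K x y) (hne : a ≠ 1) :
    a.support.card ∈ powSupportCards x ∪ powSupportCards y ∪ powSupportCards (x * y) := by
  have hconj {f : Perm α} {i : ℕ} {g : Perm α} (h : a = g * f ^ i * g⁻¹) :
      a.support.card ∈ powSupportCards f := by
    subst h
    exact ⟨i, mt conj_eq_one_iff.mpr hne, card_support_conj.symm⟩
  obtain ⟨i, g, -, h | h | h⟩ := ha
  · exact .inl (.inl (hconj h))
  · exact .inl (.inr (hconj h))
  · exact .inr (hconj h)

theorem one_mem_beauvilleSigmaIn {G : Type*} [Group G] (K : Subgroup G) (x y : G) :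
    1 ∈ beauvilleSigmaIn K x y :=
  ⟨0, 1, K.one_mem, by simp⟩

theorem beauvilleSigmaIn_inter_eq_singleton_one {K : Subgroup (Perm α)} {x₁ y₁ x₂ y₂ : Perm α}
    (h : Disjoint (powSupportCards x₁ ∪ powSupportCards y₁ ∪ powSupportCards (x₁ * y₁))
      (powSupportCards x₂ ∪ powSupportCards y₂ ∪ powSupportCards (x₂ * y₂))) :
    beauvilleSigmaIn K x₁ y₁ ∩ beauvilleSigmaIn K x₂ y₂ = {1} := by
  refine Set.Subset.antisymm (fun a ⟨ha₁, ha₂⟩ ↦ ?_) (Set.singleton_subset_iff.mpr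
    ⟨one_mem_beauvilleSigmaIn K x₁ y₁, one_mem_beauvilleSigmaIn K x₂ y₂⟩)
  by_contra hne
  exact h.ne_of_mem (card_support_mem_of_mem_beauvilleSigmaIn ha₁ hne)
    (card_support_mem_of_mem_beauvilleSigmaIn ha₂ hne) rfl

theorem card_support_pow_of_isCycle (hf : f.IsCycle) (i : ℕ) :
    f ^ i = 1 ∨ (f ^ i).support.card = f.support.card :=
  or_iff_not_imp_left.mpr fun h ↦
    congrArg Finset.card (hf.support_pow_eq_iff.mpr (mt orderOf_dvd_iff_pow_eq_one.mp h))

theorem powSupportCards_subset_of_isCycle (hf : f.IsCycle) :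
    powSupportCards f ⊆ {f.support.card} := by
  rintro _ ⟨i, hne, rfl⟩
  exact (card_support_pow_of_isCycle hf i).resolve_left hne

theorem powSupportCards_mul_subset_of_disjoint (hf : f.IsCycle) (hg : g.IsCycle)
    (hfg : f.Disjoint g) :
    powSupportCards (f * g) ⊆
      {f.support.card, g.support.card, f.support.card + g.support.card} := by
  rintro _ ⟨i, hne, rfl⟩
  rw [hfg.commute.mul_pow] at hne ⊢
  rw [(hfg.pow_disjoint_pow i i).card_support_mul]
  rcases card_support_pow_of_isCycle hf i with hfi | hfi <;>
  rcases card_support_pow_of_isCycle hg i with hgi | hgi <;>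
  simp_all

theorem powSupportCards_formPerm_subset (hl : l.Nodup) (hlen : 2 ≤ l.length) :
    powSupportCards (List.formPerm l) ⊆ {l.length} :=
  card_support_formPerm hl hlen ▸ powSupportCards_subset_of_isCycle (List.isCycle_formPerm hl hlen)

theorem powSupportCards_formPerm_mul_formPerm_subset {l₁ l₂ : List α} (h : (l₁ ++ l₂).Nodup)
    (hlen₁ : 2 ≤ l₁.length) (hlen₂ : 2 ≤ l₂.length) :
    powSupportCards (List.formPerm l₁ * List.formPerm l₂) ⊆
      {l₁.length, l₂.length, l₁.length + l₂.length} := by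
  have hl₁ : l₁.Nodup := h.of_append_left
  have hl₂ : l₂.Nodup := h.of_append_right
  rw [← card_support_formPerm hl₁ hlen₁, ← card_support_formPerm hl₂ hlen₂]
  exact powSupportCards_mul_subset_of_disjoint (List.isCycle_formPerm hl₁ hlen₁)
    (List.isCycle_formPerm hl₂ hlen₂) (disjoint_formPerm_of_nodup_append h)

theorem powSupportCards_swap_mul_swap_subset (h : [a, b, c, d].Nodup) :
    powSupportCards (swap a b * swap c d) ⊆ {2, 4} := by
  simpa using powSupportCards_formPerm_mul_formPerm_subset (l₁ := [a, b]) (l₂ := [c, d]) h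
    (by simp) (by simp)

theorem powSupportCards_union_subset_of_swap_mul_swap_of_formPerm
    (h : (a :: b :: c :: d :: l).Nodup) {x y : Perm α} (hx : x = swap a b * swap c d)
    (hy : y = List.formPerm (b :: c :: d :: l)) :
    powSupportCards x ∪ powSupportCards y ∪ powSupportCards (x * y) ⊆ {2, 4, l.length + 3} := by
  have hxy : x * y = List.formPerm (a :: b :: d :: l) := by
    rw [hx, hy, swap_mul_swap_mul_formPerm (by grind) (by grind)]
  have hx' : powSupportCards x ⊆ {2, 4} :=
    hx ▸ powSupportCards_swap_mul_swap_subset (by grind)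
  have hy' : powSupportCards y ⊆ {l.length + 3} :=
    hy ▸ powSupportCards_formPerm_subset h.of_cons (by simp)
  have hxy' : powSupportCards (x * y) ⊆ {l.length + 3} :=
    hxy ▸ powSupportCards_formPerm_subset (by grind) (by simp)
  exact Set.union_subset (Set.union_subset (hx'.trans (by grind)) (hy'.trans (by grind)))
    (hxy'.trans (by grind))

theorem powSupportCards_union_subset_of_formPerm_mul_formPerm_of_formPerm
    (h : (a :: b :: c :: d :: e :: l).Nodup) {x y : Perm α}
    (hx : x = List.formPerm [a, b, c] * List.formPerm (d :: e :: l))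
    (hy : y = List.formPerm [e, d, c, b, a]) :
    powSupportCards x ∪ powSupportCards y ∪ powSupportCards (x * y) ⊆
      {3, 5, l.length + 2, l.length + 5} := by
  have hxy : x * y = List.formPerm (d :: a :: l) := by
    rw [hx, hy, formPerm_mul_formPerm_mul_formPerm h]
  have hx' : powSupportCards x ⊆ {3, l.length + 2, 3 + (l.length + 2)} :=
    hx ▸ powSupportCards_formPerm_mul_formPerm_subset (l₁ := [a, b, c]) h (by simp) (by simp)
  have hy' : powSupportCards y ⊆ {5} :=
    hy ▸ powSupportCards_formPerm_subset (by grind) (by simp)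
  have hxy' : powSupportCards (x * y) ⊆ {l.length + 2} :=
    hxy ▸ powSupportCards_formPerm_subset (by grind) (by simp)
  exact Set.union_subset (Set.union_subset (hx'.trans (by grind)) (hy'.trans (by grind)))
    (hxy'.trans (by grind))

end SupportCards

theorem exists_finRange_eq_cons {n : ℕ} [NeZero n] (hn : 8 ≤ n) :
    ∃ l : List (Fin n), List.finRange n = 0 :: 1 :: 2 :: 3 :: 4 :: 5 :: 6 :: 7 :: l := by
  obtain ⟨k, rfl⟩ := Nat.exists_eq_add_of_le' hn
  refine ⟨(List.finRange (k + 8)).drop 8, List.map_injective_iff.mpr Fin.val_injective ?_⟩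
  simp only [List.map_cons, List.map_drop, List.map_coe_finRange_eq_range]
  simp [List.range_succ_eq_map, Nat.mod_eq_of_lt]

theorem alternatingGroup_even_beauville_structure_general {α : Type*} [Fintype α] [DecidableEq α]
    {p₀ p₁ p₂ p₃ p₄ p₅ p₆ p₇ : α} {l : List α}
    (hnodup : (p₀ :: p₁ :: p₂ :: p₃ :: p₄ :: p₅ :: p₆ :: p₇ :: l).Nodup)
    (hmem : ∀ a, a ∈ p₀ :: p₁ :: p₂ :: p₃ :: p₄ :: p₅ :: p₆ :: p₇ :: l)
    (heven : Even (Fintype.card α)) :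
    IsBeauvilleStructureFor (alternatingGroup α) (swap p₀ p₁ * swap p₂ p₃)
      (List.formPerm (p₁ :: p₂ :: p₃ :: p₄ :: p₅ :: p₆ :: p₇ :: l))
      (List.formPerm [p₀, p₁, p₂] * List.formPerm (p₃ :: p₄ :: p₅ :: p₆ :: p₇ :: l))
      (List.formPerm [p₄, p₃, p₂, p₁, p₀]) := by
  have hcard : Fintype.card α = l.length + 8 := by
    rw [← Finset.card_univ, ← Finset.eq_univ_of_forall fun a ↦ List.mem_toFinset.mpr (hmem a),
      List.toFinset_card_of_nodup hnodup]
    rfl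
  have hlen : Even l.length := by grind
  refine ⟨closure_swap_mul_swap_formPerm_eq_alternatingGroup hnodup hmem (by grind),
    closure_formPerm_mul_formPerm_formPerm_eq_alternatingGroup hnodup hmem hlen,
    beauvilleSigmaIn_inter_eq_singleton_one ?_⟩
  refine Disjoint.mono (powSupportCards_union_subset_of_swap_mul_swap_of_formPerm hnodup rfl rfl)
    (powSupportCards_union_subset_of_formPerm_mul_formPerm_of_formPerm hnodup rfl rfl) ?_
  simp only [Set.disjoint_left, List.length_cons]
  grind

/-- for even `n ≥ 8`, the pairs `x₁ = (1,2)(3,4)`, `y₁ = (2,3,4,…,n)` and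
`x₂ = (1,2,3)(4,5,…,n)`, `y₂ = (5,4,3,2,1)` form a Beauville structure for `A_n`.
Points `1,…,n` are modelled by `Fin n` (zero-based). -/
theorem alternatingGroup_even_beauville_structure
    (n : ℕ) [NeZero n] (hn : 8 ≤ n) (heven : Even n)
    (x₁ y₁ x₂ y₂ : Equiv.Perm (Fin n))
    (hx₁ : x₁ = Equiv.swap (0 : Fin n) 1 * Equiv.swap 2 3)
    (hy₁ : y₁ = List.formPerm ((List.finRange n).drop 1))
    (hx₂ : x₂ = List.formPerm [(0 : Fin n), 1, 2] * List.formPerm ((List.finRange n).drop 3))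
    (hy₂ : y₂ = List.formPerm [(4 : Fin n), 3, 2, 1, 0]) :
    IsBeauvilleStructureFor (alternatingGroup (Fin n)) x₁ y₁ x₂ y₂ := by
  obtain ⟨l, hl⟩ := exists_finRange_eq_cons hn
  subst hx₁ hy₁ hx₂ hy₂
  rw [hl]
  exact alternatingGroup_even_beauville_structure_general (hl ▸ List.nodup_finRange n)
    (hl ▸ List.mem_finRange) (by simpa using heven)
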